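/- arXiv:2406.07183 — 3 statements merged into one kernel-verified Lean document; each statement's English description precedes it below -/
import Mathlib

section
/- Let H₁ and H₂ be graphs on the same number of vertices such that for every α ∈ [0,1] the matrices A_α(H₁) and A_α(H₂) have the same characteristic polynomial and Γ_{A_α(H₁)}(λ) = Γ_{A_α(H₂)}(λ) for every real λ at which both coronals are defined. If G is a regular graph, then for every α ∈ [0,1] the graphs G ⊛ H₁ and G ⊛ H₂ are A_α-cospectral. -/
/-!
Ordering the vertices of `G ⊛ H` as `(V(G) ∪ E(G)) ∪ (V(G) × V(H))` gives
`A_α(G ⊛ H)` the block form `[[P, (1-α)B], [(1-α)Bᵀ, I ⊗ (α I + A_α(H))]]`. Here `B` records which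
vertex of `G` is joined to which copy of `H`, and `P` depends on `G`, `α` and the number of
vertices of `H` only (`AMat_totalCorona`). If `(x - α)I - A_α(H)` is invertible, taking the Schur
complement of the lower right block of `xI - A_α(G ⊛ H)` gives
`det((x-α)I - A_α(H)) ^ |V(G)| * det(xI - P - (1-α)² Γ(x-α) I_{V(G)})`, where `Γ` is the coronal
of `A_α(H)` and `I_{V(G)}` is the identity on `V(G)` extended by zero to `E(G)`
(`charPolyAt_totalCorona`). So the two characteristic polynomials take the same value at every `x`
with `x - α` outside the finite common spectrum of `A_α(H₁)` and `A_α(H₂)`, hence everywhere.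
-/

open Matrix BigOperators

attribute [local instance] Classical.propDecidable

noncomputable section

namespace AalphaSpectra

/-- The adjacency matrix (over `ℝ`) of a simple graph. -/
def adjMat {V : Type*} [Fintype V] (G : SimpleGraph V) : Matrix V V ℝ :=
  Matrix.of fun i j => if G.Adj i j then (1 : ℝ) else 0

/-- The diagonal degree matrix (over `ℝ`) of a simple graph. -/
def degMat {V : Type*} [Fintype V] (G : SimpleGraph V) : Matrix V V ℝ :=
  Matrix.diagonal fun i => ((G.neighborSet i).ncard : ℝ)

/-- The `A_α`-matrix `A_α(G) = α·D(G) + (1 - α)·A(G)` of a simple graph. -/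
def AMat {V : Type*} [Fintype V] (G : SimpleGraph V) (a : ℝ) : Matrix V V ℝ :=
  a • degMat G + (1 - a) • adjMat G

/-- The characteristic polynomial `φ(M, x) = det(x·I − M)` of a square matrix,
evaluated at `x`. -/
def charPolyAt {n : Type*} [Fintype n] (M : Matrix n n ℝ) (x : ℝ) : ℝ :=
  letI := Classical.decEq n
  (x • (1 : Matrix n n ℝ) - M).det

/-- The `M`-coronal `Γ_M(x) = 1ᵀ (x·I − M)⁻¹ 1`, the sum of all entries of
`(x·I − M)⁻¹`. -/
def coronal {n : Type*} [Fintype n] (M : Matrix n n ℝ) (x : ℝ) : ℝ :=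
  letI := Classical.decEq n
  ∑ i, ∑ j, (x • (1 : Matrix n n ℝ) - M)⁻¹ i j

/-- `G` is `r`-regular: every vertex has exactly `r` neighbours. -/
def IsRegularOfDeg {V : Type*} [Fintype V] (G : SimpleGraph V) (r : ℕ) : Prop :=
  ∀ v : V, (G.neighborSet v).ncard = r

/-- The total corona `G₁ ⊛ G₂`: take the total graph `T(G₁)` (on `V(G₁) ⊕ E(G₁)`)
together with one copy of `G₂` for every vertex of `G₁`, and join the `i`-th
vertex of `G₁` to every vertex of the `i`-th copy of `G₂`. -/
def totalCorona {V₁ V₂ : Type*} (G₁ : SimpleGraph V₁) (G₂ : SimpleGraph V₂) :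
    SimpleGraph (V₁ ⊕ (↥G₁.edgeSet ⊕ V₁ × V₂)) :=
  SimpleGraph.fromRel fun a b =>
    match a, b with
    | Sum.inl v, Sum.inl w => G₁.Adj v w
    | Sum.inl v, Sum.inr (Sum.inl e) => v ∈ (e : Sym2 V₁)
    | Sum.inr (Sum.inl e), Sum.inr (Sum.inl e') =>
        e ≠ e' ∧ ∃ v, v ∈ (e : Sym2 V₁) ∧ v ∈ (e' : Sym2 V₁)
    | Sum.inl v, Sum.inr (Sum.inr p) => v = p.1
    | Sum.inr (Sum.inr p), Sum.inr (Sum.inr q) => p.1 = q.1 ∧ G₂.Adj p.2 q.2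
    | _, _ => False

open Kronecker

/-- The total graph `T(G)`, on `V(G) ⊕ E(G)`. -/
def totalGr {V : Type*} (G : SimpleGraph V) : SimpleGraph (V ⊕ ↥G.edgeSet) :=
  SimpleGraph.fromRel fun a b =>
    match a, b with
    | Sum.inl v, Sum.inl w => G.Adj v w
    | Sum.inl v, Sum.inr e => v ∈ (e : Sym2 V)
    | Sum.inr e, Sum.inr e' => e ≠ e' ∧ ∃ v, v ∈ (e : Sym2 V) ∧ v ∈ (e' : Sym2 V)
    | _, _ => False

/-- The incidence between `V(G) ⊕ E(G)` and the copies of `H`: a vertex of `G` is joined to every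
vertex of its own copy, an edge of `G` to none. -/
def joinMat (V E W : Type*) : Matrix (V ⊕ E) (V × W) ℝ :=
  Matrix.of fun a p => Sum.elim (fun v => if v = p.1 then (1 : ℝ) else 0) (fun _ => 0) a

/-- The block of `A_α(G ⊛ H)` on `V(G) ⊕ E(G)`, for `H` with `k` vertices: it is `A_α(T(G))` with
the degree of each vertex of `G` raised by `k`. -/
def totalBlock {V : Type*} [Fintype V] (G : SimpleGraph V) [Fintype ↥G.edgeSet] (a : ℝ) (k : ℕ) :
    Matrix (V ⊕ ↥G.edgeSet) (V ⊕ ↥G.edgeSet) ℝ :=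
  AMat (totalGr G) a + a • Matrix.diagonal (Sum.elim (fun _ => (k : ℝ)) (fun _ => 0))

theorem degMat_eq {V : Type*} [Fintype V] [DecidableEq V] (G : SimpleGraph V) :
    degMat G = Matrix.diagonal fun i => ∑ j, adjMat G i j := by
  have h : degMat G = Matrix.diagonal fun i => ((G.neighborSet i).ncard : ℝ) := by
    unfold degMat
    congr!
  rw [h]
  congr 1
  funext i
  simp only [adjMat, Matrix.of_apply, Finset.sum_boole]
  rw [Set.ncard_eq_toFinset_card']
  congr 2
  ext j
  simp

theorem adjMat_totalCorona {V W : Type*} [Fintype V] [Fintype W] (G : SimpleGraph V)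
    [Fintype ↥G.edgeSet] (H : SimpleGraph W) :
    (adjMat (totalCorona G H)).submatrix (Equiv.sumAssoc _ _ _) (Equiv.sumAssoc _ _ _) =
      Matrix.fromBlocks (adjMat (totalGr G)) (joinMat V ↥G.edgeSet W)
        (joinMat V ↥G.edgeSet W)ᵀ ((1 : Matrix V V ℝ) ⊗ₖ adjMat H) := by
  ext a b
  rcases a with (v | e) | ⟨u, w⟩ <;> rcases b with (v' | e') | ⟨u', w'⟩
  all_goals simp [adjMat, totalCorona, totalGr, joinMat, Matrix.one_apply]
  -- The remaining entry is inside the copies: equal first coordinates, adjacent second ones.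
  by_cases h : u = u'
  · subst h
    have : (¬ w = w' ∧ (H.Adj w w' ∨ H.Adj w' w)) ↔ H.Adj w w' :=
      ⟨fun h => h.2.elim id SimpleGraph.Adj.symm, fun h => ⟨h.ne, Or.inl h⟩⟩
    simp [this]
  · simp [h, Ne.symm h]

theorem AMat_totalCorona {V W : Type*} [Fintype V] [Fintype W] (G : SimpleGraph V)
    [Fintype ↥G.edgeSet] (H : SimpleGraph W) (a : ℝ) :
    (AMat (totalCorona G H) a).submatrix (Equiv.sumAssoc _ _ _) (Equiv.sumAssoc _ _ _) =
      Matrix.fromBlocks (totalBlock G a (Fintype.card W)) ((1 - a) • joinMat V ↥G.edgeSet W)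
        ((1 - a) • (joinMat V ↥G.edgeSet W)ᵀ)
        ((1 : Matrix V V ℝ) ⊗ₖ (a • (1 : Matrix W W ℝ) + AMat H a)) := by
  have hadj := adjMat_totalCorona G H
  have hdeg : (degMat (totalCorona G H)).submatrix (Equiv.sumAssoc _ _ _)
      (Equiv.sumAssoc _ _ _) = Matrix.fromBlocks
        (degMat (totalGr G) + Matrix.diagonal (Sum.elim (fun _ => (Fintype.card W : ℝ)) fun _ => 0))
        0 0 ((1 : Matrix V V ℝ) ⊗ₖ (1 + degMat H)) := by
    simp only [degMat_eq]
    rw [Matrix.submatrix_diagonal_equiv]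
    have hsum : ∀ i, ∑ j, adjMat (totalCorona G H) (Equiv.sumAssoc _ _ _ i) j =
        ∑ j, Matrix.fromBlocks (adjMat (totalGr G)) (joinMat V ↥G.edgeSet W)
          (joinMat V ↥G.edgeSet W)ᵀ ((1 : Matrix V V ℝ) ⊗ₖ adjMat H) i j := by
      intro i
      rw [← hadj, ← (Equiv.sumAssoc V ↥G.edgeSet (V × W)).sum_comp]
      rfl
    have hd : ((1 : Matrix V V ℝ) ⊗ₖ (1 + Matrix.diagonal fun i => ∑ j, adjMat H i j)) =
        Matrix.diagonal fun p : V × W => 1 + ∑ j, adjMat H p.2 j := by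
      rw [← Matrix.diagonal_one, ← Matrix.diagonal_one, Matrix.diagonal_add,
        Matrix.diagonal_kronecker_diagonal]
      simp
    rw [hd, Matrix.diagonal_add, Matrix.fromBlocks_diagonal]
    congr 1
    funext i
    simp only [Function.comp]
    rw [hsum, Fintype.sum_sum_type]
    rcases i with (v | e) | ⟨u, w⟩
    · simp only [Matrix.fromBlocks_apply₁₁, Matrix.fromBlocks_apply₁₂, joinMat, Matrix.of_apply,
        Sum.elim_inl, Fintype.sum_prod_type]
      rw [Finset.sum_comm]
      simp
    · simp [joinMat]
    · simp [joinMat, Fintype.sum_prod_type, Matrix.one_apply]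
  have h : (AMat (totalCorona G H) a).submatrix (Equiv.sumAssoc _ _ _) (Equiv.sumAssoc _ _ _) =
      a • (degMat (totalCorona G H)).submatrix (Equiv.sumAssoc _ _ _) (Equiv.sumAssoc _ _ _) +
      (1 - a) • (adjMat (totalCorona G H)).submatrix (Equiv.sumAssoc _ _ _)
        (Equiv.sumAssoc _ _ _) := rfl
  rw [h, hdeg, hadj, Matrix.fromBlocks_smul, Matrix.fromBlocks_smul, Matrix.fromBlocks_add]
  congr 1
  · simp only [totalBlock, AMat, smul_add]
    abel
  · simp
  · simp
  · rw [← Matrix.kronecker_smul, ← Matrix.kronecker_smul, ← Matrix.kronecker_add]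
    simp only [AMat, smul_add, add_assoc]

theorem charPolyAt_eq {n : Type*} [Fintype n] [DecidableEq n] (M : Matrix n n ℝ) (x : ℝ) :
    charPolyAt M x = (x • (1 : Matrix n n ℝ) - M).det := by
  unfold charPolyAt
  congr!

theorem coronal_eq {n : Type*} [Fintype n] [DecidableEq n] (M : Matrix n n ℝ) (x : ℝ) :
    coronal M x = ∑ i, ∑ j, (x • (1 : Matrix n n ℝ) - M)⁻¹ i j := by
  unfold coronal
  congr!

theorem charPolyAt_eq_eval {n : Type*} [Fintype n] [DecidableEq n] (M : Matrix n n ℝ) (x : ℝ) :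
    charPolyAt M x = M.charpoly.eval x := by
  rw [charPolyAt_eq, Matrix.eval_charpoly, Matrix.smul_one_eq_diagonal]
  rfl

/-- The row of `joinMat` at a vertex `v` is the indicator of the `v`-th copy, so that
`joinMat * (I ⊗ N) * joinMatᵀ` has the sum of the entries of `N` on the diagonal at each vertex
and vanishes elsewhere. For `N = (xI - M)⁻¹` this sum is the coronal of `M`. -/
theorem joinMat_conj {V E W : Type*} [Fintype V] [Fintype E] [Fintype W] [DecidableEq V]
    [DecidableEq (V ⊕ E)] (N : Matrix W W ℝ) :
    joinMat V E W * ((1 : Matrix V V ℝ) ⊗ₖ N) * (joinMat V E W)ᵀ =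
      Matrix.diagonal (Sum.elim (fun _ => ∑ i, ∑ j, N i j) (fun _ => 0)) := by
  ext a b
  rcases a with v | e <;> rcases b with v' | e'
  · by_cases h : v = v'
    · subst h
      simp [Matrix.mul_apply, joinMat, Fintype.sum_prod_type, Matrix.one_apply]
      exact Finset.sum_comm
    · simp [Matrix.mul_apply, joinMat, Fintype.sum_prod_type, Matrix.one_apply, h]
  all_goals simp [Matrix.mul_apply, joinMat, Matrix.diagonal_apply]

/-- The Schur complement formula: when `x - α` is not an eigenvalue of `A_α(H)`, `H` enters the
characteristic polynomial of `A_α(G ⊛ H)` only through its order, its characteristic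
polynomial and its coronal. -/
theorem charPolyAt_totalCorona {V W : Type*} [Fintype V] [Fintype W] (G : SimpleGraph V)
    [Fintype ↥G.edgeSet] (H : SimpleGraph W) (a x : ℝ)
    (hx : IsUnit ((x - a) • (1 : Matrix W W ℝ) - AMat H a)) :
    charPolyAt (AMat (totalCorona G H) a) x =
      charPolyAt (AMat H a) (x - a) ^ Fintype.card V *
      (x • (1 : Matrix (V ⊕ ↥G.edgeSet) (V ⊕ ↥G.edgeSet) ℝ) - totalBlock G a (Fintype.card W) -
        (1 - a) ^ 2 • Matrix.diagonal
          (Sum.elim (fun _ => coronal (AMat H a) (x - a)) (fun _ => 0))).det := by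
  set N := (x - a) • (1 : Matrix W W ℝ) - AMat H a with hN
  have hblock : (x • (1 : Matrix _ _ ℝ) - AMat (totalCorona G H) a).submatrix
      (Equiv.sumAssoc V ↥G.edgeSet (V × W)) (Equiv.sumAssoc _ _ _) =
      Matrix.fromBlocks (x • 1 - totalBlock G a (Fintype.card W))
        (-((1 - a) • joinMat V ↥G.edgeSet W)) (-((1 - a) • (joinMat V ↥G.edgeSet W)ᵀ))
        ((1 : Matrix V V ℝ) ⊗ₖ N) := by
    have hk : (1 : Matrix V V ℝ) ⊗ₖ N =
        x • 1 - (1 : Matrix V V ℝ) ⊗ₖ (a • (1 : Matrix W W ℝ) + AMat H a) := by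
      rw [← Matrix.one_kronecker_one, ← Matrix.kronecker_smul, hN]
      ext ⟨i, j⟩ ⟨k, l⟩
      simp only [Matrix.kronecker_apply, Matrix.sub_apply, Matrix.add_apply, Matrix.smul_apply,
        smul_eq_mul]
      ring
    have h1 : (x • (1 : Matrix _ _ ℝ) - AMat (totalCorona G H) a).submatrix
        (Equiv.sumAssoc V ↥G.edgeSet (V × W)) (Equiv.sumAssoc _ _ _) =
        x • (1 : Matrix _ _ ℝ).submatrix (Equiv.sumAssoc V ↥G.edgeSet (V × W))
          (Equiv.sumAssoc _ _ _) -
        (AMat (totalCorona G H) a).submatrix (Equiv.sumAssoc _ _ _) (Equiv.sumAssoc _ _ _) := rfl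
    rw [h1, AMat_totalCorona, Matrix.submatrix_one_equiv, ← Matrix.fromBlocks_one,
      Matrix.fromBlocks_smul, sub_eq_add_neg, Matrix.fromBlocks_neg, Matrix.fromBlocks_add, hk]
    simp [sub_eq_add_neg]
  have hK : IsUnit ((1 : Matrix V V ℝ) ⊗ₖ N) := by
    rw [Matrix.isUnit_iff_isUnit_det, Matrix.det_kronecker]
    simpa using ((Matrix.isUnit_iff_isUnit_det _).1 hx).pow _
  have := hK.invertible
  rw [charPolyAt_eq, ← Matrix.det_submatrix_equiv_self (Equiv.sumAssoc V ↥G.edgeSet (V × W)),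
    hblock, Matrix.det_fromBlocks₂₂, Matrix.det_kronecker, Matrix.invOf_eq_nonsing_inv,
    Matrix.inv_kronecker, inv_one, charPolyAt_eq, coronal_eq, ← hN,
    ← joinMat_conj (V := V) (E := ↥G.edgeSet) N⁻¹]
  simp [smul_smul, pow_two]

theorem totalCorona_cospectral_of_cospectral_coronal
    {W₁ W₂ V : Type*} [Fintype W₁] [Fintype W₂] [Fintype V]
    (H₁ : SimpleGraph W₁) (H₂ : SimpleGraph W₂) (G : SimpleGraph V)
    [Fintype ↥G.edgeSet]
    (hcard : Fintype.card W₁ = Fintype.card W₂)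
    (hcosp : ∀ α ∈ Set.Icc (0 : ℝ) 1, ∀ x : ℝ,
      charPolyAt (AMat H₁ α) x = charPolyAt (AMat H₂ α) x)
    (hcor : ∀ α ∈ Set.Icc (0 : ℝ) 1, ∀ x : ℝ,
      IsUnit (x • (1 : Matrix W₁ W₁ ℝ) - AMat H₁ α) →
      IsUnit (x • (1 : Matrix W₂ W₂ ℝ) - AMat H₂ α) →
      coronal (AMat H₁ α) x = coronal (AMat H₂ α) x)
    (r : ℕ) (hreg : IsRegularOfDeg G r)
    (α : ℝ) (hα : α ∈ Set.Icc (0 : ℝ) 1) :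
    ∀ x : ℝ, charPolyAt (AMat (totalCorona G H₁) α) x =
      charPolyAt (AMat (totalCorona G H₂) α) x := by
  have hpoly : (AMat (totalCorona G H₁) α).charpoly = (AMat (totalCorona G H₂) α).charpoly := by
    apply Polynomial.eq_of_infinite_eval_eq
    -- The excluded points are the roots of a shifted copy of the characteristic polynomial.
    have hfin : {x : ℝ | (AMat H₁ α).charpoly.eval (x - α) = 0}.Finite := by
      have h := (Polynomial.finite_setOfPred_isRoot (Matrix.charpoly_monic (AMat H₁ α)).ne_zero)
      exact h.preimage (f := fun x : ℝ => x - α) (sub_left_injective.injOn)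
    refine hfin.infinite_compl.mono fun x hx => ?_
    have hdet : charPolyAt (AMat H₁ α) (x - α) ≠ 0 := by
      rw [charPolyAt_eq_eval]
      exact hx
    have hu₁ : IsUnit ((x - α) • (1 : Matrix W₁ W₁ ℝ) - AMat H₁ α) := by
      rw [Matrix.isUnit_iff_isUnit_det, ← charPolyAt_eq]
      exact hdet.isUnit
    have hu₂ : IsUnit ((x - α) • (1 : Matrix W₂ W₂ ℝ) - AMat H₂ α) := by
      rw [Matrix.isUnit_iff_isUnit_det, ← charPolyAt_eq, ← hcosp α hα]
      exact hdet.isUnit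
    show Polynomial.eval x _ = Polynomial.eval x _
    rw [← charPolyAt_eq_eval, ← charPolyAt_eq_eval, charPolyAt_totalCorona G H₁ α x hu₁,
      charPolyAt_totalCorona G H₂ α x hu₂, hcosp α hα, hcor α hα _ hu₁ hu₂, hcard]
  intro x
  rw [charPolyAt_eq_eval, charPolyAt_eq_eval, hpoly]

end AalphaSpectra
end
end

section
/- Let G₁ be an r₁-regular graph on n₁ vertices and G₂ an r₂-regular graph on n₂ vertices, and let α ∈ [0,1]. Then for every real λ: (λ − α − r₂)^{n₁} · φ(A_α(G₁ ⊠ G₂), λ) = ∏_{i=1}^{n₂}(λ − α − λ_i(A_α(G₂)))^{n₁} · ∏_{i=1}^{n₁}[ (λ − 2αr₁ − (1−α)λ_i(A(G₁)))·((λ − α − r₂)(λ − (r₁+n₂)α) − (1−α)²n₂) − (1−α)²(λ − α − r₂)λ_i(A(G₁))² ]. In particular, the A_α-spectrum of G₁ ⊠ G₂ consists of α + λ_i(A_α(G₂)) for i = 2,…,n₂ each with multiplicity n₁, together with, for each i = 1,…,n₁, the three roots of the displayed cubic factor. -/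
/-!
Order the vertices of `G₁ ⊠ G₂` as original vertices, added vertices `U`, copies of `G₂`. Put
`c = λ − α − r₂`, `A = A(G₁)` and `C = (λ − α)I − A_α(G₂)`. By regularity (`charMat_corona`),
`λI − A_α(G₁ ⊠ G₂)` is a block matrix with rows

* `(λ − 2αr₁)I − (1 − α)A`, `−(1 − α)A`, `0`;
* `−(1 − α)A`, `(λ − (r₁ + n₂)α)I`, `−(1 − α) I ⊗ 1ᵀ`;
* `0`, `−(1 − α) I ⊗ 1`, `I ⊗ C`.

Since `C 1 = c 1`, scaling the `U`-columns by `c` and adding `1 − α` times the columns of the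
corresponding copies of `G₂` clears the lower left block. This multiplies the determinant by
`c ^ n₁`, the power on the left-hand side, and never inverts `C`, so no `λ` is exceptional. What
remains is `det C ^ n₁` times a 2 × 2 block determinant whose lower right block is the scalar matrix
`sI`, with `s = c(λ − (r₁ + n₂)α) − (1 − α)² n₂` (`det_corona`). It equals
`det (s((λ − 2αr₁)I − (1 − α)A) − c(1 − α)² A²)` (`det_fromBlocks_scalar`), the determinant of a
quadratic polynomial in `A`, and diagonalizing `A` (`det_quadratic`) turns it into the product over
the eigenvalues of `G₁`.
-/

open Matrix BigOperators

attribute [local instance] Classical.propDecidable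

noncomputable section

namespace AalphaSpectra

/-- The splitting add vertex corona `G₁ ⊠ G₂`: take the splitting graph `Spl(G₁)`
(original vertices `Sum.inl (Sum.inl v)`, added vertices `Sum.inl (Sum.inr u)`)
together with one copy of `G₂` for each vertex of `G₁`, and join every vertex of
the `i`-th copy of `G₂` to the added vertex `uᵢ ∈ U(G₁)`. -/
def splitAddVertexCorona {V₁ V₂ : Type*} (G₁ : SimpleGraph V₁) (G₂ : SimpleGraph V₂) :
    SimpleGraph ((V₁ ⊕ V₁) ⊕ V₁ × V₂) :=
  SimpleGraph.fromRel fun a b =>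
    match a, b with
    | Sum.inl (Sum.inl v), Sum.inl (Sum.inl w) => G₁.Adj v w
    | Sum.inl (Sum.inl v), Sum.inl (Sum.inr u) => G₁.Adj v u
    | Sum.inl (Sum.inr u), Sum.inr p => u = p.1
    | Sum.inr p, Sum.inr q => p.1 = q.1 ∧ G₂.Adj p.2 q.2
    | _, _ => False

/-! ### Determinants of block matrices and of quadratics in a symmetric matrix -/

section Determinants

variable {m n : Type*} [Fintype m] [Fintype n]

/-- The decidability instance is arbitrary, so that the lemma applies to sum types however their
equality is decided. -/
theorem charPolyAt_eq_det [DecidableEq n] (M : Matrix n n ℝ) (x : ℝ) :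
    charPolyAt M x = (x • (1 : Matrix n n ℝ) - M).det := by
  unfold charPolyAt
  congr!

/-- Block triangular determinant, with an arbitrary decidability instance on the sum type. -/
theorem det_upper [DecidableEq m] [DecidableEq n] [DecidableEq (m ⊕ n)]
    (A : Matrix m m ℝ) (B : Matrix m n ℝ) (D : Matrix n n ℝ) :
    (fromBlocks A B 0 D).det = A.det * D.det := by
  convert det_fromBlocks_zero₂₁ A B D

theorem det_lower [DecidableEq m] [DecidableEq n] [DecidableEq (m ⊕ n)]
    (A : Matrix m m ℝ) (C : Matrix n m ℝ) (D : Matrix n n ℝ) :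
    (fromBlocks A 0 C D).det = A.det * D.det := by
  convert det_fromBlocks_zero₁₂ A C D

/-- Determinant of a 2 × 2 block matrix whose lower right block is scalar; `s = 0` is allowed. -/
theorem det_fromBlocks_scalar [DecidableEq n] [DecidableEq (n ⊕ n)]
    (X Y Z : Matrix n n ℝ) (s : ℝ) :
    (fromBlocks X Y Z (s • (1 : Matrix n n ℝ))).det = (s • X - Y * Z).det := by
  -- For `s ≠ 0` this is block elimination; both sides are continuous in `s`.
  have key : ∀ t : ℝ, t ≠ 0 →
      (fromBlocks X Y Z (t • (1 : Matrix n n ℝ))).det = (t • X - Y * Z).det := by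
    intro t ht
    have h : fromBlocks X Y Z (t • (1 : Matrix n n ℝ)) *
        fromBlocks (t • (1 : Matrix n n ℝ)) 0 (-Z) 1 =
        fromBlocks (t • X - Y * Z) Y 0 (t • (1 : Matrix n n ℝ)) := by
      rw [fromBlocks_multiply]
      simp [sub_eq_add_neg]
    have h' := congrArg Matrix.det h
    rw [det_mul, det_lower, det_upper, det_one, mul_one] at h'
    refine mul_right_cancel₀ ?_ h'
    rw [det_smul, det_one, mul_one]
    exact pow_ne_zero _ ht
  have hc : (fun t : ℝ => (fromBlocks X Y Z (t • (1 : Matrix n n ℝ))).det) =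
      fun t : ℝ => (t • X - Y * Z).det := by
    refine Continuous.ext_on (dense_compl_singleton (0 : ℝ)) ?_ ?_ fun t ht => key t ht
    · exact (Continuous.matrix_fromBlocks continuous_const continuous_const continuous_const
        (by fun_prop)).matrix_det
    · exact Continuous.matrix_det (by fun_prop)
  exact congrFun hc s

/-- The determinant of a real quadratic polynomial in a symmetric matrix `A` is the product of its
values at the eigenvalues `f i` of `A`, by orthogonal diagonalization. -/
theorem det_quadratic {A : Matrix n n ℝ} (hA : A.IsHermitian) {k : ℕ} (f : Fin k → ℝ)
    (hf : ∀ x : ℝ, charPolyAt A x = ∏ i, (x - f i)) (p q r : ℝ) :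
    (p • (1 : Matrix n n ℝ) + q • A + r • (A * A)).det =
      ∏ i, (p + q * f i + r * f i ^ 2) := by
  have hchar : A.charpoly = ∏ i, (Polynomial.X - Polynomial.C (f i)) := by
    refine Polynomial.funext fun x => ?_
    rw [Matrix.eval_charpoly, Polynomial.eval_prod]
    simp only [Polynomial.eval_sub, Polynomial.eval_X, Polynomial.eval_C]
    rw [← hf x, charPolyAt_eq_det, scalar_apply, smul_one_eq_diagonal]
  have hroots : Multiset.map hA.eigenvalues Finset.univ.val = Multiset.map f Finset.univ.val := by
    have h1 := hA.roots_charpoly_eq_eigenvalues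
    rw [hchar, Polynomial.roots_prod _ _
      (Finset.prod_ne_zero_iff.2 fun i _ => Polynomial.X_sub_C_ne_zero _)] at h1
    simpa using h1.symm
  have hprod : ∏ i, (p + q * hA.eigenvalues i + r * hA.eigenvalues i ^ 2) =
      ∏ i, (p + q * f i + r * f i ^ 2) := by
    have h2 := congrArg (fun S => (Multiset.map (fun x : ℝ => p + q * x + r * x ^ 2) S).prod) hroots
    simp only [Multiset.map_map] at h2
    exact h2
  rw [← hprod]
  set U : Matrix n n ℝ := (hA.eigenvectorUnitary : Matrix n n ℝ) with hU
  set D : Matrix n n ℝ := diagonal hA.eigenvalues with hD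
  have hUU : U * star U = 1 := Unitary.coe_mul_star_self hA.eigenvectorUnitary
  have hUU' : star U * U = 1 := Unitary.coe_star_mul_self hA.eigenvectorUnitary
  have hs : A = U * D * star U := by
    have := hA.spectral_theorem
    rw [Unitary.conjStarAlgAut_apply] at this
    exact this
  have hq : p • (1 : Matrix n n ℝ) + q • A + r • (A * A) =
      U * (p • (1 : Matrix n n ℝ) + q • D + r • (D * D)) * star U := by
    have hAA : A * A = U * (D * D) * star U := by
      calc A * A = U * D * (star U * U) * D * star U := by
            conv_lhs => rw [hs]
            simp only [Matrix.mul_assoc]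
        _ = _ := by rw [hUU']; simp only [Matrix.mul_assoc, Matrix.one_mul]
    rw [hAA]
    nth_rewrite 1 [hs]
    simp only [Matrix.mul_add, Matrix.add_mul, Matrix.mul_smul, Matrix.smul_mul, Matrix.mul_one,
      hUU]
  have hdiag : p • (1 : Matrix n n ℝ) + q • D + r • (D * D) =
      diagonal fun i => p + q * hA.eigenvalues i + r * hA.eigenvalues i ^ 2 := by
    rw [hD, diagonal_mul_diagonal, smul_one_eq_diagonal, ← diagonal_smul, ← diagonal_smul,
      diagonal_add, diagonal_add]
    congr 1
    ext i
    simp [pow_two]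
  rw [hq, det_mul_comm, ← Matrix.mul_assoc, hUU', Matrix.one_mul, hdiag, det_diagonal]

/-- The inverse-free core of the computation: a block matrix of the shape of `λI − A_α(G₁ ⊠ G₂)`,
where all rows of `C` have the same sum `c`. The value `c = 0` is allowed. -/
theorem det_corona (X Y : Matrix m m ℝ) (C : Matrix n n ℝ) (t b c : ℝ)
    (hC : ∀ w, ∑ w', C w w' = c) :
    c ^ Fintype.card m *
      (fromBlocks (fromBlocks X Y Y (t • (1 : Matrix m m ℝ)))
        (of fun x p => Sum.elim (fun _ => 0) (fun u => if u = p.1 then -b else 0) x)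
        (of fun p x => Sum.elim (fun _ => 0) (fun u => if u = p.1 then -b else 0) x)
        (kroneckerMap (· * ·) (1 : Matrix m m ℝ) C)).det =
      C.det ^ Fintype.card m *
        ((c * t - b ^ 2 * Fintype.card n) • X - c • (Y * Y)).det := by
  set N : Matrix (m ⊕ m) (m × n) ℝ :=
    of fun x p => Sum.elim (fun _ => 0) (fun u => if u = p.1 then -b else 0) x with hN
  set N' : Matrix (m × n) (m ⊕ m) ℝ :=
    of fun p x => Sum.elim (fun _ => 0) (fun u => if u = p.1 then -b else 0) x with hN'
  set K : Matrix (m × n) (m × n) ℝ := kroneckerMap (· * ·) (1 : Matrix m m ℝ) C with hK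
  set L : Matrix (m × n) (m ⊕ m) ℝ :=
    of fun p x => Sum.elim (fun _ => 0) (fun u => if u = p.1 then b else 0) x with hL
  set P : Matrix (m ⊕ m) (m ⊕ m) ℝ := fromBlocks 1 0 0 (c • (1 : Matrix m m ℝ)) with hP
  -- Right multiplication by `fromBlocks P 0 L 1` scales the columns of the second `m`-block by `c`
  -- and adds to each of them `b` times the columns of its copy of `n`. As `C` maps the all-ones
  -- vector to `c` times itself, this clears the lower left block.
  have hKL : N' * P + K * L = 0 := by
    ext ⟨v, w⟩ (u | u)
    · simp [hN', hP, hL, hK, Matrix.mul_apply, Fintype.sum_sum_type, Matrix.one_apply]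
    · have : ∑ w', C w w' * b = c * b := by rw [← Finset.sum_mul, hC]
      by_cases h : u = v
      · subst h
        simp [hN', hP, hL, hK, Matrix.mul_apply, Fintype.sum_sum_type, Matrix.one_apply,
          Fintype.sum_prod_type, this]
        ring
      · simp [hN', hP, hL, hK, Matrix.mul_apply, Fintype.sum_sum_type, Matrix.one_apply,
          Fintype.sum_prod_type, h, Ne.symm h]
  have hNL : fromBlocks X Y Y (t • (1 : Matrix m m ℝ)) * P + N * L =
      fromBlocks X (c • Y) Y ((c * t - b ^ 2 * Fintype.card n) • (1 : Matrix m m ℝ)) := by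
    have hNL0 : N * L = fromBlocks 0 0 0 ((-(b ^ 2 * Fintype.card n)) • (1 : Matrix m m ℝ)) := by
      ext (v | v) (u | u)
      · simp [hN, hL, Matrix.mul_apply]
      · simp [hN, hL, Matrix.mul_apply]
      · simp [hN, hL, Matrix.mul_apply]
      · by_cases h : v = u
        · subst h
          simp [hN, hL, Matrix.mul_apply, Fintype.sum_prod_type]
          ring
        · simp [hN, hL, Matrix.mul_apply, Fintype.sum_prod_type, h]
    rw [hNL0, hP, fromBlocks_multiply, fromBlocks_add]
    congr 1
    · simp
    · simp
    · simp
    · simp only [Matrix.mul_zero, zero_add, Matrix.mul_smul, Matrix.mul_one, smul_smul, ← add_smul,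
        sub_eq_add_neg]
  have hmul : fromBlocks (fromBlocks X Y Y (t • (1 : Matrix m m ℝ))) N N' K *
      fromBlocks P 0 L 1 =
      fromBlocks (fromBlocks X (c • Y) Y
        ((c * t - b ^ 2 * Fintype.card n) • (1 : Matrix m m ℝ))) N 0 K := by
    rw [fromBlocks_multiply, hKL, hNL]
    simp
  have hdet := congrArg Matrix.det hmul
  have hKdet : K.det = C.det ^ Fintype.card m := by
    have := det_kronecker (1 : Matrix m m ℝ) C
    rw [det_one, one_pow, one_mul] at this
    rw [← this]
  have hPdet : P.det = c ^ Fintype.card m := by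
    rw [hP, det_lower, det_one, det_smul, det_one, one_mul, mul_one]
  rw [det_mul, det_lower, hPdet, det_one, mul_one, det_upper, det_fromBlocks_scalar, hKdet,
    Matrix.smul_mul] at hdet
  linear_combination hdet

end Determinants

/-! ### The blocks of the `A_α`-matrix of the corona -/

section Corona

variable {V₁ V₂ : Type*} [Fintype V₁] [Fintype V₂]

theorem sum_adjMat_row (G : SimpleGraph V₁) (v : V₁) :
    ∑ w, adjMat G v w = ((G.neighborSet v).ncard : ℝ) := by
  have : G.neighborSet v = ((Finset.univ.filter fun w => G.Adj v w : Finset V₁) : Set V₁) := by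
    ext w; simp
  rw [this, Set.ncard_coe_finset]
  simp [adjMat]

theorem sum_AMat_row (G : SimpleGraph V₁) (a : ℝ) (v : V₁) :
    ∑ w, AMat G a v w = ((G.neighborSet v).ncard : ℝ) := by
  simp only [AMat, degMat, Matrix.add_apply, Matrix.smul_apply, smul_eq_mul, diagonal_apply,
    Finset.sum_add_distrib, ← Finset.mul_sum, sum_adjMat_row, Finset.sum_ite_eq, Finset.mem_univ,
    if_true]
  ring

theorem adjMat_corona (G₁ : SimpleGraph V₁) (G₂ : SimpleGraph V₂) :
    adjMat (splitAddVertexCorona G₁ G₂) =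
      fromBlocks (fromBlocks (adjMat G₁) (adjMat G₁) (adjMat G₁) 0)
        (of fun x p => Sum.elim (fun _ => 0) (fun u => if u = p.1 then 1 else 0) x)
        (of fun p x => Sum.elim (fun _ => 0) (fun u => if u = p.1 then 1 else 0) x)
        (kroneckerMap (· * ·) (1 : Matrix V₁ V₁ ℝ) (adjMat G₂)) := by
  ext ((v | v) | ⟨v, v'⟩) ((w | w) | ⟨w, w'⟩)
  · have : G₁.Adj v w → v ≠ w := fun h => h.ne
    simp [adjMat, splitAddVertexCorona, SimpleGraph.fromRel_adj, G₁.adj_comm w v]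
    grind
  · simp [adjMat, splitAddVertexCorona, SimpleGraph.fromRel_adj]
  · simp [adjMat, splitAddVertexCorona, SimpleGraph.fromRel_adj]
  · simp [adjMat, splitAddVertexCorona, SimpleGraph.fromRel_adj, G₁.adj_comm w v]
  · simp [adjMat, splitAddVertexCorona, SimpleGraph.fromRel_adj]
  · simp [adjMat, splitAddVertexCorona, SimpleGraph.fromRel_adj]
  · simp [adjMat, splitAddVertexCorona, SimpleGraph.fromRel_adj]
  · simp [adjMat, splitAddVertexCorona, SimpleGraph.fromRel_adj]
  · have : G₂.Adj v' w' → v' ≠ w' := fun h => h.ne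
    simp [adjMat, splitAddVertexCorona, SimpleGraph.fromRel_adj, G₂.adj_comm w' v',
      Matrix.one_apply, eq_comm (a := w) (b := v)]
    grind

theorem degMat_corona (G₁ : SimpleGraph V₁) (G₂ : SimpleGraph V₂) {r₁ r₂ : ℕ}
    (h₁ : IsRegularOfDeg G₁ r₁) (h₂ : IsRegularOfDeg G₂ r₂) :
    degMat (splitAddVertexCorona G₁ G₂) =
      diagonal (Sum.elim (Sum.elim (fun _ => 2 * (r₁ : ℝ)) fun _ => r₁ + Fintype.card V₂)
        fun _ => r₂ + 1) := by
  have h₁' : ∀ v, ∑ w, adjMat G₁ v w = (r₁ : ℝ) := fun v => by rw [sum_adjMat_row, h₁ v]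
  have h₂' : ∀ v, ∑ w, adjMat G₂ v w = (r₂ : ℝ) := fun v => by rw [sum_adjMat_row, h₂ v]
  suffices h : ∀ x, (((splitAddVertexCorona G₁ G₂).neighborSet x).ncard : ℝ) =
      Sum.elim (Sum.elim (fun _ => 2 * (r₁ : ℝ)) fun _ => r₁ + Fintype.card V₂)
        (fun _ => r₂ + 1) x by
    ext x y
    simp only [degMat, diagonal_apply, h]
    congr!
  intro x
  rw [← sum_adjMat_row, adjMat_corona]
  rcases x with (v | v) | ⟨v, v'⟩
  · simp [Fintype.sum_sum_type, h₁', two_mul]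
  · have hcopy : ∑ p : V₁ × V₂, (if v = p.1 then (1 : ℝ) else 0) = Fintype.card V₂ := by
      rw [Fintype.sum_prod_type]
      change ∑ x, ∑ _w : V₂, (if v = x then (1 : ℝ) else 0) = _
      simp only [Finset.sum_const, Finset.card_univ, nsmul_eq_mul, mul_ite, mul_one, mul_zero,
        Finset.sum_ite_eq, Finset.mem_univ, if_true]
    simp [Fintype.sum_sum_type, h₁', hcopy, -Finset.sum_boole]
  · simp [Fintype.sum_sum_type, Fintype.sum_prod_type, Matrix.one_apply, h₂', add_comm]

theorem charMat_corona (G₁ : SimpleGraph V₁) (G₂ : SimpleGraph V₂) {r₁ r₂ : ℕ}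
    (h₁ : IsRegularOfDeg G₁ r₁) (h₂ : IsRegularOfDeg G₂ r₂) (a x : ℝ) :
    x • (1 : Matrix ((V₁ ⊕ V₁) ⊕ V₁ × V₂) ((V₁ ⊕ V₁) ⊕ V₁ × V₂) ℝ) -
        AMat (splitAddVertexCorona G₁ G₂) a =
      fromBlocks
        (fromBlocks ((x - 2 * a * r₁) • (1 : Matrix V₁ V₁ ℝ) - (1 - a) • adjMat G₁)
          (-(1 - a) • adjMat G₁) (-(1 - a) • adjMat G₁)
          ((x - (r₁ + Fintype.card V₂) * a) • (1 : Matrix V₁ V₁ ℝ)))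
        (of fun y p => Sum.elim (fun _ => 0) (fun u => if u = p.1 then -(1 - a) else 0) y)
        (of fun p y => Sum.elim (fun _ => 0) (fun u => if u = p.1 then -(1 - a) else 0) y)
        (kroneckerMap (· * ·) (1 : Matrix V₁ V₁ ℝ)
          ((x - a) • (1 : Matrix V₂ V₂ ℝ) - AMat G₂ a)) := by
  have hd : degMat G₂ = (r₂ : ℝ) • (1 : Matrix V₂ V₂ ℝ) := by
    rw [smul_one_eq_diagonal]
    unfold degMat
    congr 1
    ext v
    rw [h₂ v]
  rw [AMat, adjMat_corona, degMat_corona G₁ G₂ h₁ h₂, AMat, hd]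
  ext ((v | v) | ⟨v, v'⟩) ((w | w) | ⟨w, w'⟩) <;>
    simp [Matrix.one_apply, diagonal_apply] <;> (try split_ifs) <;> (try simp_all) <;> (try ring)

end Corona

theorem charPolyAt_splitAddVertexCorona_regular
    {V₁ V₂ : Type*} [Fintype V₁] [Fintype V₂]
    (G₁ : SimpleGraph V₁) (G₂ : SimpleGraph V₂)
    (n₁ n₂ r₁ r₂ : ℕ)
    (hn₁ : Fintype.card V₁ = n₁) (hn₂ : Fintype.card V₂ = n₂)
    (hreg₁ : IsRegularOfDeg G₁ r₁) (hreg₂ : IsRegularOfDeg G₂ r₂)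
    (α : ℝ) (hα : α ∈ Set.Icc (0 : ℝ) 1)
    (f : Fin n₁ → ℝ) (hfa : Antitone f)
    (hf : ∀ x : ℝ, charPolyAt (adjMat G₁) x = ∏ i, (x - f i))
    (g : Fin n₂ → ℝ) (hga : Antitone g)
    (hg : ∀ x : ℝ, charPolyAt (AMat G₂ α) x = ∏ i, (x - g i)) :
    ∀ lam : ℝ,
      (lam - α - (r₂ : ℝ)) ^ n₁ * charPolyAt (AMat (splitAddVertexCorona G₁ G₂) α) lam =
        (∏ i, (lam - α - g i) ^ n₁) *
          ∏ i,
            ((lam - 2 * α * (r₁ : ℝ) - (1 - α) * f i) *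
                ((lam - α - (r₂ : ℝ)) * (lam - ((r₁ : ℝ) + (n₂ : ℝ)) * α) -
                  (1 - α) ^ 2 * (n₂ : ℝ)) -
              (1 - α) ^ 2 * (lam - α - (r₂ : ℝ)) * (f i) ^ 2) := by
  intro lam
  have hA : (adjMat G₁).IsHermitian := by
    ext v w
    simp [adjMat, G₁.adj_comm]
  have hrow : ∀ w, ∑ w', ((lam - α) • (1 : Matrix V₂ V₂ ℝ) - AMat G₂ α) w w' =
      lam - α - r₂ := by
    intro w
    simp only [Matrix.sub_apply, Finset.sum_sub_distrib, sum_AMat_row, hreg₂ w]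
    simp [Matrix.one_apply]
  have hdet := det_corona ((lam - 2 * α * r₁) • (1 : Matrix V₁ V₁ ℝ) - (1 - α) • adjMat G₁)
    (-(1 - α) • adjMat G₁) ((lam - α) • (1 : Matrix V₂ V₂ ℝ) - AMat G₂ α)
    (lam - (r₁ + Fintype.card V₂) * α) (1 - α) (lam - α - r₂) hrow
  rw [← charMat_corona G₁ G₂ hreg₁ hreg₂, ← charPolyAt_eq_det, ← charPolyAt_eq_det, hg, hn₁, hn₂]
    at hdet
  rw [hdet, Finset.prod_pow]
  congr 1
  set s : ℝ := (lam - α - r₂) * (lam - (r₁ + n₂) * α) - (1 - α) ^ 2 * n₂ with hs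
  have hquad := det_quadratic hA f hf (s * (lam - 2 * α * r₁)) (-(s * (1 - α)))
    (-((lam - α - r₂) * (1 - α) ^ 2))
  have hmat : s • ((lam - 2 * α * r₁) • (1 : Matrix V₁ V₁ ℝ) - (1 - α) • adjMat G₁) -
      (lam - α - r₂) • ((-(1 - α) • adjMat G₁) * (-(1 - α) • adjMat G₁)) =
      (s * (lam - 2 * α * r₁)) • (1 : Matrix V₁ V₁ ℝ) + (-(s * (1 - α))) • adjMat G₁ +
        (-((lam - α - r₂) * (1 - α) ^ 2)) • (adjMat G₁ * adjMat G₁) := by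
    rw [Matrix.smul_mul, Matrix.mul_smul]
    module
  rw [hmat, hquad]
  refine Finset.prod_congr rfl fun i _ => ?_
  ring

end AalphaSpectra
end
end

section
/- Let G₁ and G₂ be r-regular graphs on the same number n of vertices whose adjacency matrices have the same characteristic polynomial (A-cospectral regular graphs), and let H be an arbitrary finite simple graph. Then for every α ∈ [0,1], the graphs G₁ ⋇ H and G₂ ⋇ H are A_α-cospectral, i.e., A_α(G₁ ⋇ H) and A_α(G₂ ⋇ H) have the same characteristic polynomial. -/
/-!
For an `r`-regular graph `G` with adjacency matrix `A`, all rows of the corona are controlled by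
`A` alone: identifying the vertex set `(V ⊕ V) ⊕ V × W` with `V × ((Unit ⊕ Unit) ⊕ W)`, the
adjacency matrix of `G ⋇ H` becomes `I ⊗ K₀ + A ⊗ K₁`, where `K₀`, `K₁` depend only on `H`
(`adjMat_corona`). Degrees are row sums, so by regularity the degree matrix is `I ⊗ D` with `D`
depending only on `H` and `r`; hence `A_α(G ⋇ H) = I ⊗ C₀ + A ⊗ C₁` (`AMat_corona`), with
`C₀`, `C₁` independent of `G`.

Real symmetric matrices with equal characteristic polynomials are similar, by the spectral theorem
(`exists_similar`). If `Q` intertwines the two adjacency matrices, then `Q ⊗ I` intertwines the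
two `A_α`-matrices, so these are similar and have the same characteristic polynomial. No
determinant is computed and no coronal is needed, so there are no exceptional values of `x`.
-/

open Matrix BigOperators

attribute [local instance] Classical.propDecidable

noncomputable section

namespace AalphaSpectra

/-- The splitting neighbourhood corona `G₁ ⋇ G₂`: take the splitting graph
`Spl(G₁)` (original vertices `Sum.inl (Sum.inl v)`, added vertices
`Sum.inl (Sum.inr u)`) together with one copy of `G₂` for each vertex of `G₁`,
and join every vertex of the `i`-th copy of `G₂` to all the vertices of `V(G₁)`
adjacent to `vᵢ` in `G₁`. -/
def splitNbhdCorona {V₁ V₂ : Type*} (G₁ : SimpleGraph V₁) (G₂ : SimpleGraph V₂) :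
    SimpleGraph ((V₁ ⊕ V₁) ⊕ V₁ × V₂) :=
  SimpleGraph.fromRel fun a b =>
    match a, b with
    | Sum.inl (Sum.inl v), Sum.inl (Sum.inl w) => G₁.Adj v w
    | Sum.inl (Sum.inl v), Sum.inl (Sum.inr u) => G₁.Adj v u
    | Sum.inl (Sum.inl v), Sum.inr p => G₁.Adj v p.1
    | Sum.inr p, Sum.inr q => p.1 = q.1 ∧ G₂.Adj p.2 q.2
    | _, _ => False

open scoped Kronecker

/-- Similarity through a pair of mutually inverse, possibly differently indexed, matrices. -/
lemma charPolyAt_similar {m n : Type*} [Fintype m] [Fintype n] [DecidableEq m] [DecidableEq n]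
    {M : Matrix m m ℝ} {N : Matrix n n ℝ} {P : Matrix n m ℝ} {Q : Matrix m n ℝ}
    (hPQ : P * Q = 1) (hQP : Q * P = 1) (h : P * M * Q = N) (x : ℝ) :
    charPolyAt M x = charPolyAt N x := by
  have key : (x • (1 : Matrix n n ℝ) - N) = P * (x • (1 : Matrix m m ℝ) - M) * Q := by
    rw [Matrix.mul_sub, Matrix.sub_mul, h]
    simp [hPQ]
  have := det_conj_of_mul_eq_one (N := x • (1 : Matrix m m ℝ) - M) hPQ hQP
  rw [← key] at this
  unfold charPolyAt
  convert this.symm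

lemma charPolyAt_submatrix {m n : Type*} [Fintype m] [Fintype n] (M : Matrix m m ℝ)
    (e : n ≃ m) (x : ℝ) : charPolyAt (M.submatrix e e) x = charPolyAt M x := by
  unfold charPolyAt
  rw [← det_submatrix_equiv_self e, submatrix_sub, submatrix_smul]
  simp

lemma charpoly_eq_of_charPolyAt {m n : Type*} [Fintype m] [Fintype n] [DecidableEq m]
    [DecidableEq n] {A : Matrix m m ℝ} {B : Matrix n n ℝ}
    (h : ∀ x, charPolyAt A x = charPolyAt B x) : A.charpoly = B.charpoly := by
  refine Polynomial.funext fun x => ?_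
  have := h x
  simp only [charPolyAt, smul_one_eq_diagonal] at this
  rw [eval_charpoly, eval_charpoly, scalar_apply, scalar_apply]
  convert this

/-- Real symmetric matrices with the same characteristic polynomial are similar: both are
orthogonally conjugate to the same diagonal matrix. -/
lemma exists_similar {m n : Type*} [Fintype m] [Fintype n] [DecidableEq m] [DecidableEq n]
    {A : Matrix m m ℝ} {B : Matrix n n ℝ} (e : n ≃ m) (hA : A.IsHermitian) (hB : B.IsHermitian)
    (h : A.charpoly = B.charpoly) :
    ∃ (P : Matrix n m ℝ) (Q : Matrix m n ℝ), P * Q = 1 ∧ Q * P = 1 ∧ P * A * Q = B := by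
  have hA' : (A.submatrix e e).IsHermitian := hA.submatrix e
  have hc : (A.submatrix e e).charpoly = B.charpoly := by
    rw [← h, ← charpoly_reindex e.symm A]; rfl
  have he := (hA'.eigenvalues_eq_eigenvalues_iff hB).2 hc
  have h1 := hA'.spectral_theorem
  have h2 := hB.spectral_theorem
  rw [he] at h1
  rw [Unitary.conjStarAlgAut_apply] at h1 h2
  set U : Matrix n n ℝ := (hA'.eigenvectorUnitary : Matrix n n ℝ) with hU
  set V : Matrix n n ℝ := (hB.eigenvectorUnitary : Matrix n n ℝ) with hV
  set D : Matrix n n ℝ := diagonal (RCLike.ofReal ∘ hB.eigenvalues) with hD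
  have u1 : U * star U = 1 := Unitary.coe_mul_star_self _
  have u2 : star U * U = 1 := Unitary.coe_star_mul_self _
  have v1 : V * star V = 1 := Unitary.coe_mul_star_self _
  have v2 : star V * V = 1 := Unitary.coe_star_mul_self _
  have s1 : (V * star U) * (U * star V) = 1 := by
    rw [Matrix.mul_assoc, ← Matrix.mul_assoc (star U), u2, Matrix.one_mul, v1]
  have s2 : (U * star V) * (V * star U) = 1 := by
    rw [Matrix.mul_assoc, ← Matrix.mul_assoc (star V), v2, Matrix.one_mul, u1]
  have s3 : (V * star U) * A.submatrix e e * (U * star V) = B := by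
    rw [h1, h2]
    calc V * star U * (U * D * star U) * (U * star V)
        = V * (star U * U) * D * (star U * U) * star V := by simp only [Matrix.mul_assoc]
      _ = V * D * star V := by rw [u2, Matrix.mul_one, Matrix.mul_one]
  refine ⟨(V * star U).submatrix id e.symm, (U * star V).submatrix e.symm id, ?_, ?_, ?_⟩
  · rw [submatrix_mul_equiv, s1]; simp
  · rw [← submatrix_mul _ _ _ _ _ Function.bijective_id, s2]; simp
  · have : A = (A.submatrix e e).submatrix e.symm e.symm := by simp
    rw [this, submatrix_mul_equiv, submatrix_mul_equiv, s3]; simp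

/-- The vertices of the corona lying over one vertex of the base graph: the vertex itself, its
splitting twin, and its copy of the second graph. -/
abbrev Fib (W : Type*) := (Unit ⊕ Unit) ⊕ W

/-- The vertex set of the corona, fibred over the base graph. -/
def fibEquiv (V W : Type*) : (V ⊕ V) ⊕ V × W ≃ V × Fib W where
  toFun
    | Sum.inl (Sum.inl v) => (v, Sum.inl (Sum.inl ()))
    | Sum.inl (Sum.inr v) => (v, Sum.inl (Sum.inr ()))
    | Sum.inr p => (p.1, Sum.inr p.2)
  invFun
    | (v, Sum.inl (Sum.inl _)) => Sum.inl (Sum.inl v)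
    | (v, Sum.inl (Sum.inr _)) => Sum.inl (Sum.inr v)
    | (v, Sum.inr w) => Sum.inr (v, w)
  left_inv := by rintro ((v | v) | p) <;> rfl
  right_inv := by rintro ⟨v, ((_ | _) | w)⟩ <;> rfl

/-- Adjacency within one fibre: only the copy of `H` contributes. -/
def K₀ {W : Type*} [Fintype W] (H : SimpleGraph W) : Matrix (Fib W) (Fib W) ℝ :=
  fromBlocks 0 0 0 (adjMat H)

/-- The pairs of fibre positions that are joined over each edge of the base graph: those
involving an original vertex. -/
def K₁ (W : Type*) : Matrix (Fib W) (Fib W) ℝ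
  | Sum.inl (Sum.inl _), _ => 1
  | Sum.inl (Sum.inr _), Sum.inl (Sum.inl _) => 1
  | Sum.inl (Sum.inr _), Sum.inl (Sum.inr _) => 0
  | Sum.inl (Sum.inr _), Sum.inr _ => 0
  | Sum.inr _, Sum.inl (Sum.inl _) => 1
  | Sum.inr _, Sum.inl (Sum.inr _) => 0
  | Sum.inr _, Sum.inr _ => 0

lemma adjMat_corona_s13 {V W : Type*} [Fintype V] [Fintype W] (G : SimpleGraph V)
    (H : SimpleGraph W) :
    adjMat (splitNbhdCorona G H) =
      ((1 : Matrix V V ℝ) ⊗ₖ K₀ H + adjMat G ⊗ₖ K₁ W).submatrix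
        (fibEquiv V W) (fibEquiv V W) := by
  ext i j
  rcases i with (v | v) | ⟨v, a⟩ <;> rcases j with (w | w) | ⟨w, b⟩ <;>
    simp [adjMat, splitNbhdCorona, fibEquiv, K₀, K₁, kroneckerMap_apply, Matrix.one_apply]
  · have := G.adj_comm v w
    have : G.Adj v w → v ≠ w := SimpleGraph.Adj.ne
    grind
  · simp [G.adj_comm]
  · simp [G.adj_comm]
  · have := H.adj_comm a b
    have : H.Adj a b → a ≠ b := SimpleGraph.Adj.ne
    grind

/-- Degrees are row sums of the adjacency matrix. -/
lemma ncard_neighborSet {V : Type*} [Fintype V] (G : SimpleGraph V) (v : V) :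
    ((G.neighborSet v).ncard : ℝ) = ∑ w, adjMat G v w := by
  simp [adjMat, Set.ncard_eq_toFinset_card', SimpleGraph.neighborSet]

/-- The common degree of the vertices of the corona in a given fibre position, for an
`r`-regular base graph. -/
def fibDeg {W : Type*} [Fintype W] (H : SimpleGraph W) (r : ℕ) (t : Fib W) : ℝ :=
  ∑ s, (K₀ H t s + r * K₁ W t s)

lemma AMat_corona {V W : Type*} [Fintype V] [Fintype W] (G : SimpleGraph V)
    (H : SimpleGraph W) (r : ℕ) (hG : IsRegularOfDeg G r) (a : ℝ) :
    AMat (splitNbhdCorona G H) a =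
      ((1 : Matrix V V ℝ) ⊗ₖ (a • diagonal (fibDeg H r) + (1 - a) • K₀ H) +
        adjMat G ⊗ₖ ((1 - a) • K₁ W)).submatrix (fibEquiv V W) (fibEquiv V W) := by
  have hdeg : degMat (splitNbhdCorona G H) =
      ((1 : Matrix V V ℝ) ⊗ₖ diagonal (fibDeg H r)).submatrix
        (fibEquiv V W) (fibEquiv V W) := by
    rw [← diagonal_one, diagonal_kronecker_diagonal, submatrix_diagonal_equiv, degMat]
    suffices h : (fun i => (((splitNbhdCorona G H).neighborSet i).ncard : ℝ)) =
        (fun p : V × Fib W => 1 * fibDeg H r p.2) ∘ fibEquiv V W by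
      rw [h]
      congr!
    funext i
    rw [Function.comp_apply, ncard_neighborSet, adjMat_corona_s13]
    simp only [submatrix_apply]
    rw [Equiv.sum_comp (fibEquiv V W) fun p =>
      ((1 : Matrix V V ℝ) ⊗ₖ K₀ H + adjMat G ⊗ₖ K₁ W) (fibEquiv V W i) p]
    obtain ⟨v, t⟩ := fibEquiv V W i
    have hrow : ∑ w, adjMat G v w = r := by rw [← ncard_neighborSet, hG v]
    rw [Fintype.sum_prod_type_right]
    simp [kroneckerMap_apply, Finset.sum_add_distrib, ← Finset.sum_mul, hrow, fibDeg,
      Matrix.one_apply]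
  rw [AMat, hdeg, adjMat_corona_s13]
  ext i j
  simp [kroneckerMap_apply]
  ring

lemma adjMat_isHermitian {V : Type*} [Fintype V] (G : SimpleGraph V) :
    (adjMat G).IsHermitian := by
  ext i j
  simp [adjMat, G.adj_comm]

theorem splitNbhdCorona_cospectral_of_cospectral_regular
    {V₁ V₂ W : Type*} [Fintype V₁] [Fintype V₂] [Fintype W]
    (G₁ : SimpleGraph V₁) (G₂ : SimpleGraph V₂) (H : SimpleGraph W)
    (n r : ℕ)
    (hn₁ : Fintype.card V₁ = n) (hn₂ : Fintype.card V₂ = n)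
    (hreg₁ : IsRegularOfDeg G₁ r) (hreg₂ : IsRegularOfDeg G₂ r)
    (hcosp : ∀ x : ℝ, charPolyAt (adjMat G₁) x = charPolyAt (adjMat G₂) x)
    (α : ℝ) (hα : α ∈ Set.Icc (0 : ℝ) 1) :
    ∀ x : ℝ, charPolyAt (AMat (splitNbhdCorona G₁ H) α) x =
      charPolyAt (AMat (splitNbhdCorona G₂ H) α) x := by
  obtain ⟨P, Q, hPQ, hQP, hPA⟩ := exists_similar
    (Fintype.equivOfCardEq (hn₂.trans hn₁.symm)) (adjMat_isHermitian G₁) (adjMat_isHermitian G₂)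
    (charpoly_eq_of_charPolyAt hcosp)
  intro x
  rw [AMat_corona G₁ H r hreg₁, AMat_corona G₂ H r hreg₂, charPolyAt_submatrix,
    charPolyAt_submatrix]
  refine charPolyAt_similar (P := P ⊗ₖ (1 : Matrix (Fib W) (Fib W) ℝ))
    (Q := Q ⊗ₖ (1 : Matrix (Fib W) (Fib W) ℝ)) ?_ ?_ ?_ x
  · rw [← mul_kronecker_mul, hPQ, Matrix.one_mul, one_kronecker_one]
  · rw [← mul_kronecker_mul, hQP, Matrix.one_mul, one_kronecker_one]
  · simp only [Matrix.mul_add, Matrix.add_mul, ← mul_kronecker_mul, Matrix.one_mul,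
      Matrix.mul_one, hPQ, hPA]

end AalphaSpectra
end
end
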